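/- For every n : ℕ and every target function f : (Fin n → Bool) → Bool, the coefficient function g^(n+1) produced by the learning algorithm after n + 1 updates is exactly the ANF coefficient function of f: h_{g^(n+1)} = f, and g^(n+1) is the unique coefficient function c satisfying h_c = f. -/

import Mathlib

instance : Std.Commutative (α := Bool) xor := ⟨Bool.xor_comm⟩
instance : Std.Associative (α := Bool) xor := ⟨Bool.xor_assoc⟩

/-- XOR of the Boolean values `f a` over a finite set `s`. -/
def xorSum {α : Type*} (s : Finset α) (f : α → Bool) : Bool :=
  s.fold xor false f

/-- The Boolean monomial: `m_u(x) = true` iff `x i = true` for every `i` with `u i = true`. -/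
def mGate (n : ℕ) (u x : Fin n → Bool) : Bool :=
  decide (∀ i, u i = true → x i = true)

/-- The Hamming weight `w_H(u) = |1_u|` of a bit string. -/
def hammingWeight (n : ℕ) (u : Fin n → Bool) : ℕ :=
  (Finset.univ.filter fun i => u i = true).card

/-- The output `h_g(x)` of the network with coefficient function `g`:
the XOR over all `u` of `g u AND m_u(x)`. -/
def netOut (n : ℕ) (g : (Fin n → Bool) → Bool) (x : Fin n → Bool) : Bool :=
  xorSum Finset.univ fun u : Fin n → Bool => g u && mGate n u x

/-- The sequence of coefficient functions produced by the learning algorithm for the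
target function `f`: `g⁽⁰⁾` is constant false, and `g⁽ᵏ⁺¹⁾` flips `g⁽ᵏ⁾` exactly on the
erroneous inputs `E⁽ᵏ⁾ = {x | h_{g⁽ᵏ⁾}(x) ≠ f(x)}`. -/
def gSeq (n : ℕ) (f : (Fin n → Bool) → Bool) : ℕ → ((Fin n → Bool) → Bool)
  | 0 => fun _ => false
  | k + 1 => fun u =>
      if netOut n (gSeq n f k) u ≠ f u then !(gSeq n f k u) else gSeq n f k u

/- One update sends `g` to `g'` with `g' x = f x + ∑_{u < x} g u` (mod 2), so `g' x` depends only on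
the values of `g` at points of smaller Hamming weight. Hence `k` updates of any two coefficient
functions agree at all points of weight less than `k`, and since weights are at most `n`, the result
of more than `n` updates does not depend on the starting point. It is therefore the unique fixed
point of the update, and a fixed point is a coefficient function without errors. -/

open Function

/-- An operator `T` on functions `α → β` is strictly causal for a rank `r` if `T g x` only depends
on the values of `g` at points of rank smaller than that of `x`. -/
def StrictlyCausal {α β : Type*} (r : α → ℕ) (T : (α → β) → α → β) : Prop :=
  ∀ ⦃g g' : α → β⦄ ⦃x : α⦄, (∀ y, r y < r x → g y = g' y) → T g x = T g' x

namespace StrictlyCausal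

variable {α β : Type*} {r : α → ℕ} {T : (α → β) → α → β}

lemma iterate_apply_eq_of_lt (hT : StrictlyCausal r T) (g g' : α → β) {k : ℕ} {x : α}
    (hx : r x < k) : T^[k] g x = T^[k] g' x := by
  induction k generalizing x with
  | zero => exact absurd hx (Nat.not_lt_zero _)
  | succ k ih =>
    rw [iterate_succ_apply', iterate_succ_apply']
    exact hT fun y hy => ih (hy.trans_le (Nat.le_of_lt_succ hx))

lemma iterate_eq_iterate (hT : StrictlyCausal r T) {m : ℕ} (hr : ∀ x, r x < m) (g g' : α → β) :
    T^[m] g = T^[m] g' :=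
  funext fun x => hT.iterate_apply_eq_of_lt g g' (hr x)

lemma isFixedPt_iterate (hT : StrictlyCausal r T) {m : ℕ} (hr : ∀ x, r x < m) (g : α → β) :
    IsFixedPt T (T^[m] g) :=
  (iterate_succ_apply' T m g).symm.trans (hT.iterate_eq_iterate hr (T g) g)

lemma eq_iterate_of_isFixedPt (hT : StrictlyCausal r T) {m : ℕ} (hr : ∀ x, r x < m)
    {c : α → β} (hc : IsFixedPt T c) (g : α → β) : c = T^[m] g :=
  (hc.iterate m).eq.symm.trans (hT.iterate_eq_iterate hr c g)

end StrictlyCausal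

section XorSum

variable {α : Type*}

lemma xorSum_insert [DecidableEq α] {s : Finset α} {a : α} (ha : a ∉ s) (f : α → Bool) :
    xorSum (insert a s) f = xor (f a) (xorSum s f) :=
  Finset.fold_insert ha

lemma xorSum_congr {s : Finset α} {f g : α → Bool} (h : ∀ a ∈ s, f a = g a) :
    xorSum s f = xorSum s g :=
  Finset.fold_congr h

lemma xorSum_and_eq_xorSum_filter (s : Finset α) (f p : α → Bool) :
    xorSum s (fun a => f a && p a) = xorSum {a ∈ s | p a} f := by
  classical
  induction s using Finset.induction_on with
  | empty => rfl
  | insert a s ha ih =>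
    rw [xorSum_insert ha, ih, Finset.filter_insert]
    cases hp : p a
    · simp
    · simp [xorSum_insert, ha]

end XorSum

local instance : LocallyFiniteOrder Bool :=
  Fintype.toLocallyFiniteOrder

variable {n : ℕ}

lemma mGate_eq_true_iff {u x : Fin n → Bool} : mGate n u x = true ↔ u ≤ x :=
  decide_eq_true_iff

lemma hammingWeight_strictMono : StrictMono (hammingWeight n) := by
  intro u x hux
  obtain ⟨hle, i, hi⟩ := Pi.lt_def.mp hux
  obtain ⟨hui, hxi⟩ := Bool.lt_iff.mp hi
  refine Finset.card_lt_card (Finset.ssubset_iff_of_subset ?_ |>.mpr ⟨i, ?_, ?_⟩)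
  · exact Finset.monotone_filter_right _ fun j _ => hle j
  · simp [hxi]
  · simp [hui]

lemma hammingWeight_le (x : Fin n → Bool) : hammingWeight n x ≤ n :=
  card_finset_fin_le _

lemma netOut_eq_xorSum_Iic (g : (Fin n → Bool) → Bool) (x : Fin n → Bool) :
    netOut n g x = xorSum (Finset.Iic x) g := by
  rw [netOut, xorSum_and_eq_xorSum_filter]
  congr 1
  ext u
  simp [mGate_eq_true_iff]

lemma netOut_eq_xor_xorSum_Iio (g : (Fin n → Bool) → Bool) (x : Fin n → Bool) :
    netOut n g x = xor (g x) (xorSum (Finset.Iio x) g) := by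
  rw [netOut_eq_xorSum_Iic, ← Finset.Iio_insert, xorSum_insert Finset.notMem_Iio_self]

/-- One update of the learning algorithm for the target function `f`, from an arbitrary coefficient
function `g`. -/
def learnStep (f g : (Fin n → Bool) → Bool) (u : Fin n → Bool) : Bool :=
  if netOut n g u ≠ f u then !(g u) else g u

lemma gSeq_eq_iterate_learnStep (f : (Fin n → Bool) → Bool) (k : ℕ) :
    gSeq n f k = (learnStep f)^[k] fun _ => false := by
  induction k with
  | zero => rfl
  | succ k ih =>
    rw [iterate_succ_apply', ← ih]
    rfl

lemma isFixedPt_learnStep_iff {f g : (Fin n → Bool) → Bool} :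
    IsFixedPt (learnStep f) g ↔ ∀ x, netOut n g x = f x := by
  simp [IsFixedPt, funext_iff, learnStep]

lemma learnStep_eq_xor (f g : (Fin n → Bool) → Bool) (x : Fin n → Bool) :
    learnStep f g x = xor (g x) (xor (netOut n g x) (f x)) := by
  rw [learnStep]
  cases netOut n g x <;> cases f x <;> simp

lemma learnStep_eq_xor_xorSum_Iio (f g : (Fin n → Bool) → Bool) (x : Fin n → Bool) :
    learnStep f g x = xor (xorSum (Finset.Iio x) g) (f x) := by
  rw [learnStep_eq_xor, netOut_eq_xor_xorSum_Iio, Bool.xor_assoc]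
  exact Bool.bne_self_left _ _

lemma strictlyCausal_learnStep (f : (Fin n → Bool) → Bool) :
    StrictlyCausal (hammingWeight n) (learnStep f) := by
  intro g g' x h
  rw [learnStep_eq_xor_xorSum_Iio, learnStep_eq_xor_xorSum_Iio,
    xorSum_congr fun u hu => h u (hammingWeight_strictMono (Finset.mem_Iio.mp hu))]

theorem learning_finds_anf_general {m : ℕ} (hm : n < m) (f g : (Fin n → Bool) → Bool) :
    (∀ x, netOut n ((learnStep f)^[m] g) x = f x) ∧
      ∀ c : (Fin n → Bool) → Bool, (∀ x, netOut n c x = f x) → c = (learnStep f)^[m] g := by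
  have hT := strictlyCausal_learnStep f
  have hr (x : Fin n → Bool) : hammingWeight n x < m := (hammingWeight_le x).trans_lt hm
  exact ⟨isFixedPt_learnStep_iff.mp (hT.isFixedPt_iterate hr g),
    fun _ hc => hT.eq_iterate_of_isFixedPt hr (isFixedPt_learnStep_iff.mpr hc) g⟩

/-- the coefficient function `g⁽ⁿ⁺¹⁾` produced after `n + 1` updates is
exactly the ANF coefficient function of `f`: `h_{g⁽ⁿ⁺¹⁾} = f`, and it is the unique
coefficient function `c` with `h_c = f`. -/
theorem learning_finds_anf (n : ℕ) (f : (Fin n → Bool) → Bool) :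
    (∀ x : Fin n → Bool, netOut n (gSeq n f (n + 1)) x = f x) ∧
    (∀ c : (Fin n → Bool) → Bool,
      (∀ x : Fin n → Bool, netOut n c x = f x) → c = gSeq n f (n + 1)) := by
  rw [gSeq_eq_iterate_learnStep]
  exact learning_finds_anf_general n.lt_succ_self f _
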